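/- arXiv:2511.03398 — 4 statements merged into one kernel-verified Lean document; each statement's English description precedes it below -/
import Mathlib

section
/- Suppose 1 + Σ_{t=0}^{ℓ} η_t S_{t+1} ≠ 0. For n−k−ℓ−1 ≤ i ≤ n−k−1 set Θ_i = (Σ_{t=0}^{ℓ} η_t S_{k+t+i−n+1}) / (1 + Σ_{t=0}^{ℓ} η_t S_{t+1}). Let H be the (n−k)×n matrix over F_q whose i-th row (0 ≤ i ≤ n−k−ℓ−2) is ((u_j/v_j) α_j^i)_{j=1,…,n} and whose i-th row for n−k−ℓ−1 ≤ i ≤ n−k−1 is ((u_j/v_j)(α_j^i − Θ_i α_j^{n−k}))_{j=1,…,n}. Then H has rank n−k, G·Hᵀ = 0, and consequently the row space of H equals the Euclidean dual code C⊥. -/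
/-!
The link between the two matrices is the classical identity
`∑ j, u j * α j ^ m = S_{m - n + 1}` (`sum_uu_mul_pow`), proved by induction on `n` and `m`: both
sides satisfy the recurrence `A (n + 1) (m + 1) - α 0 * A (n + 1) m = A n m`, where the `A n` on the
right refers to the nodes without `α 0`, and for `m = 0` the left side is the top coefficient of the
Lagrange interpolant of the constant `1`.

Pairing a row of `G` with a row of `H` cancels the multipliers `v j`, so that each entry of `G * Hᵀ`
is a combination of such power sums.  The exponents that occur stay below `n - 1`, which gives
`0`, except for the last row of `G` against a row of `H` carrying a `Θ i`; there the entry is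
`∑ t, η t * S_{k+t+i-n+1} - Θ i * (1 + ∑ t, η t * S_{t+1})`, which vanishes by the choice of `Θ i`.

The rows of `G` and of `H` are, up to nonzero column multipliers, evaluations at `n` distinct points
of polynomials of degree `< n` whose low-order coefficients form an identity matrix, hence they are
linearly independent (`linearIndependent_eval`).  So `H` has rank `n - k`, while `C⊥`, the kernel of
`G`, has dimension `n - k` as well, and the inclusion of the row space of `H` in `C⊥` is an equality.
-/


open Finset Matrix

/-- Complete homogeneous symmetric polynomial of (integer) degree `t`
evaluated at `α`, with value `0` for negative `t`. -/
noncomputable def hS {F : Type*} [CommRing F] {n : ℕ} (α : Fin n → F) (t : ℤ) : F :=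
  if t < 0 then 0 else ∑ f ∈ Finset.Nat.antidiagonalTuple n t.toNat, ∏ i, α i ^ f i

/-- `u i = ∏_{j ≠ i} (α i - α j)⁻¹`. -/
noncomputable def uu {F : Type*} [Field F] {n : ℕ} (α : Fin n → F) (i : Fin n) : F :=
  ∏ j ∈ Finset.univ.erase i, (α i - α j)⁻¹

/-- The generator matrix `G` of the (+)-(L,P)-TGRS code. -/
noncomputable def Gmat {F : Type*} [Field F] {n : ℕ} (k : ℕ) {ℓ : ℕ} (α v : Fin n → F)
    (η : Fin (ℓ + 1) → F) : Matrix (Fin k) (Fin n) F :=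
  Matrix.of fun i j =>
    if (i : ℕ) < k - 1 then v j * α j ^ (i : ℕ)
    else v j * (α j ^ (k - 1) + ∑ t : Fin (ℓ + 1), η t * α j ^ (k + (t : ℕ)))

/-- The (+)-(L,P)-TGRS code: the span of the rows of `G`. -/
noncomputable def codeC {F : Type*} [Field F] {n : ℕ} (k : ℕ) {ℓ : ℕ} (α v : Fin n → F)
    (η : Fin (ℓ + 1) → F) : Submodule F (Fin n → F) :=
  Submodule.span F (Set.range (Gmat k α v η))

/-- The Euclidean dual code. -/
noncomputable def dualCode {F : Type*} [Field F] {n : ℕ} (C : Submodule F (Fin n → F)) :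
    Submodule F (Fin n → F) where
  carrier := {x | ∀ c ∈ C, ∑ j, x j * c j = 0}
  zero_mem' := by intro c hc; simp
  add_mem' := by
    intro a b ha hb c hc
    have h1 := ha c hc
    have h2 := hb c hc
    simp only [Set.mem_setOf_eq, Pi.add_apply, add_mul] at *
    rw [Finset.sum_add_distrib, h1, h2, add_zero]
  smul_mem' := by
    intro r a ha c hc
    have h1 := ha c hc
    simp only [Set.mem_setOf_eq, Pi.smul_apply, smul_eq_mul, mul_assoc] at *
    rw [← Finset.mul_sum, h1, mul_zero]

/-- Splitting off the first variable `α 0`: `S_t(α) = S_t(α 1, …, α n) + α 0 * S_{t-1}(α)`. -/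
lemma hS_succ {F : Type*} [CommRing F] {n : ℕ} (α : Fin (n + 1) → F) (t : ℤ) :
    hS α t = hS (Fin.tail α) t + α 0 * hS α (t - 1) := by
  have key : ∀ s : ℕ, ∑ f ∈ Finset.Nat.antidiagonalTuple (n + 1) s, ∏ i, α i ^ f i =
      ∑ p ∈ antidiagonal s, α 0 ^ p.1 *
        ∑ f ∈ Finset.Nat.antidiagonalTuple n p.2, ∏ i, Fin.tail α i ^ f i := by
    intro s
    simp_rw [Finset.mul_sum]
    rw [Finset.sum_sigma']
    symm
    refine Finset.sum_bij' (fun x _ => Fin.cons x.1.1 x.2)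
      (fun f _ => ⟨(f 0, ∑ i, Fin.tail f i), Fin.tail f⟩) ?_ ?_ ?_ ?_ ?_
    · rintro ⟨⟨a, b⟩, f⟩ h
      simp only [mem_sigma, HasAntidiagonal.mem_antidiagonal, Finset.Nat.mem_antidiagonalTuple] at h ⊢
      rw [Fin.sum_cons, h.2, h.1]
    · intro f h
      simp only [mem_sigma, HasAntidiagonal.mem_antidiagonal, Finset.Nat.mem_antidiagonalTuple] at h ⊢
      rw [Fin.sum_univ_succ] at h
      exact ⟨h, trivial⟩
    · rintro ⟨⟨a, b⟩, f⟩ h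
      simp only [mem_sigma, HasAntidiagonal.mem_antidiagonal, Finset.Nat.mem_antidiagonalTuple] at h
      simp [h.2]
    · intro f h
      simp
    · rintro ⟨⟨a, b⟩, f⟩ h
      rw [Fin.prod_univ_succ]
      simp [Fin.tail]
  rcases lt_trichotomy t 0 with h | rfl | h
  · have h' : t - 1 < 0 := by omega
    simp [hS, h, h']
  · simp [hS, Finset.Nat.antidiagonalTuple_zero_right]
  · obtain ⟨s, rfl⟩ : ∃ s : ℕ, t = s + 1 := ⟨(t - 1).toNat, by omega⟩
    have h1 : ¬ ((s : ℤ) + 1 < 0) := by omega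
    have h2 : ((s : ℤ) + 1).toNat = s + 1 := by omega
    have h3 : ¬ ((s : ℤ) < 0) := by omega
    simp only [hS, h1, h2, h3, add_sub_cancel_right, if_false, Int.toNat_natCast]
    rw [key (s + 1), key s, Finset.Nat.antidiagonal_succ, Finset.sum_cons, Finset.sum_map,
      Finset.mul_sum (antidiagonal s)]
    simp [pow_succ', mul_assoc]

lemma hS_neg {F : Type*} [CommRing F] {n : ℕ} (α : Fin n → F) {t : ℤ} (h : t < 0) :
    hS α t = 0 := by simp [hS, h]

lemma hS_zero {F : Type*} [CommRing F] {n : ℕ} (α : Fin n → F) : hS α 0 = 1 := by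
  simp [hS, Finset.Nat.antidiagonalTuple_zero_right]

lemma uu_succ {F : Type*} [Field F] {n : ℕ} (α : Fin (n + 1) → F) (hα : Function.Injective α)
    (i : Fin n) : uu α i.succ * (α i.succ - α 0) = uu (Fin.tail α) i := by
  have hne : α i.succ - α 0 ≠ 0 := sub_ne_zero.2 (hα.ne (Fin.succ_ne_zero i))
  have h0 : (0 : Fin (n + 1)) ∈ univ.erase i.succ := by simp [(Fin.succ_ne_zero i).symm]
  have h1 : (univ.erase i.succ).erase (0 : Fin (n + 1)) = (univ.erase i).map (Fin.succEmb n) := by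
    ext x
    refine Fin.cases ?_ (fun y => ?_) x <;> simp
  unfold uu
  rw [← Finset.mul_prod_erase _ _ h0, h1, Finset.prod_map, mul_comm, ← mul_assoc,
    mul_inv_cancel₀ hne, one_mul]
  rfl

/-- The weighted power sums of the nodes are complete homogeneous symmetric polynomials. -/
lemma sum_uu_mul_pow {F : Type*} [Field F] {n : ℕ} (α : Fin n → F) (hα : Function.Injective α)
    (m : ℕ) : ∑ j, uu α j * α j ^ m = hS α ((m : ℤ) - n + 1) := by
  induction n generalizing m with
  | zero =>
    have h1 : ¬ ((m : ℤ) + 1 < 0) := by omega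
    have h2 : ((m : ℤ) + 1).toNat = m + 1 := by omega
    simp [hS, h1, h2]
  | succ n ih =>
    induction m with
    | zero =>
      have h := Lagrange.coeff_eq_sum (s := univ) (v := α) (P := 1) hα.injOn (by
        rw [Polynomial.degree_one, card_univ, Fintype.card_fin]
        exact_mod_cast n.succ_pos)
      have h2 : ∑ j, uu α j * α j ^ 0 = (1 : Polynomial F).coeff n := by
        simp only [card_univ, Fintype.card_fin, Nat.add_sub_cancel] at h
        rw [h]
        simp [uu]
      rw [h2, Polynomial.coeff_one]
      rcases Nat.eq_zero_or_pos n with rfl | hn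
      · simp [hS_zero]
      · rw [if_neg hn.ne', hS_neg]
        push_cast; omega
    | succ m ihm =>
      have hrec : ∑ j, uu α j * α j ^ (m + 1) =
          ∑ j, uu (Fin.tail α) j * Fin.tail α j ^ m + α 0 * ∑ j, uu α j * α j ^ m := by
        rw [Fin.sum_univ_succ, Fin.sum_univ_succ, mul_add, Finset.mul_sum, add_left_comm,
          ← Finset.sum_add_distrib]
        congr 1
        · ring
        · refine Finset.sum_congr rfl fun j _ => ?_
          rw [← uu_succ α hα]
          simp only [Fin.tail]
          ring
      rw [hrec, ihm, ih (Fin.tail α) (fun a b h => Fin.succ_injective _ (hα h)),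
        hS_succ α (((m + 1 : ℕ) : ℤ) - (n + 1 : ℕ) + 1)]
      push_cast
      rw [show (m : ℤ) + 1 - (n + 1) + 1 = m - n + 1 by ring,
        show (m : ℤ) - (n + 1) + 1 = m - n + 1 - 1 by ring]

/-- Polynomials of degree `< n` whose low-order coefficients form an identity matrix have linearly
independent vectors of (rescaled) values at `n` distinct points. -/
lemma linearIndependent_eval {F : Type*} [Field F] {n m : ℕ} (α w : Fin n → F)
    (hα : Function.Injective α) (hw : ∀ j, w j ≠ 0) (p : Fin m → Polynomial F)
    (hdeg : ∀ i, (p i).degree < n)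
    (hcoeff : ∀ i i' : Fin m, (p i).coeff (i' : ℕ) = if i = i' then 1 else 0) :
    LinearIndependent F (fun i j => w j * (p i).eval (α j) : Fin m → Fin n → F) := by
  rw [Fintype.linearIndependent_iff]
  intro g hg i
  have hP : ∑ i, Polynomial.C (g i) * p i = 0 := by
    refine Polynomial.eq_zero_of_degree_lt_of_eval_index_eq_zero (s := univ) (v := α)
      hα.injOn ?_ ?_
    · rw [card_univ, Fintype.card_fin]
      refine (Polynomial.degree_sum_le _ _).trans_lt ?_
      rw [Finset.sup_lt_iff (WithBot.bot_lt_coe _)]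
      exact fun i _ => (Polynomial.C_mul' (g i) (p i) ▸ Polynomial.degree_smul_le _ _).trans_lt
        (hdeg i)
    · intro j _
      have h := congrFun hg j
      simp only [Finset.sum_apply, Pi.smul_apply, smul_eq_mul, Pi.zero_apply] at h
      have h2 : w j * ∑ i, g i * (p i).eval (α j) = 0 := by
        rw [← h, Finset.mul_sum]
        exact Finset.sum_congr rfl fun _ _ => by ring
      simpa [Polynomial.eval_finsetSum] using (mul_eq_zero.1 h2).resolve_left (hw j)
  have h := congrArg (fun q => Polynomial.coeff q (i : ℕ)) hP
  simpa [Polynomial.finsetSum_coeff, hcoeff] using h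

lemma uu_ne_zero {F : Type*} [Field F] {n : ℕ} (α : Fin n → F) (hα : Function.Injective α)
    (j : Fin n) : uu α j ≠ 0 :=
  Finset.prod_ne_zero_iff.2 fun i hi =>
    inv_ne_zero (sub_ne_zero.2 (hα.ne (Finset.ne_of_mem_erase hi).symm))

lemma linearIndependent_Gmat {F : Type*} [Field F] {n k ℓ : ℕ}
    (hk2 : 2 ≤ k) (hℓ : k + ℓ + 1 ≤ n) (α v : Fin n → F) (hα : Function.Injective α)
    (hv : ∀ j, v j ≠ 0) (η : Fin (ℓ + 1) → F) : LinearIndependent F (Gmat k α v η).row := by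
  let p : Fin k → Polynomial F := fun i =>
    if (i : ℕ) < k - 1 then Polynomial.X ^ (i : ℕ)
    else Polynomial.X ^ (k - 1) + ∑ t : Fin (ℓ + 1), Polynomial.C (η t) * Polynomial.X ^ (k + (t : ℕ))
  have h := linearIndependent_eval α v hα hv p ?_ ?_
  · convert h using 1
    ext i j
    simp only [Gmat, Matrix.row, Matrix.of_apply, p]
    split_ifs <;> simp [Polynomial.eval_finsetSum]
  · intro i
    rw [Polynomial.degree_lt_iff_coeff_zero]
    intro m hm
    simp only [p]
    split_ifs with hi
    · rw [Polynomial.coeff_X_pow, if_neg (by omega)]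
    · rw [Polynomial.coeff_add, Polynomial.coeff_X_pow, if_neg (by omega),
        Polynomial.finsetSum_coeff, zero_add]
      refine Finset.sum_eq_zero fun t _ => ?_
      rw [Polynomial.coeff_C_mul, Polynomial.coeff_X_pow, if_neg (by omega), mul_zero]
  · intro i i'
    simp only [p]
    split_ifs with hi hii hii
    · simp [hii]
    · rw [Polynomial.coeff_X_pow, if_neg (fun h => hii (Fin.ext h.symm))]
    all_goals
      rw [Polynomial.coeff_add, Polynomial.coeff_X_pow, Polynomial.finsetSum_coeff,
        Finset.sum_eq_zero fun t _ => by
          rw [Polynomial.coeff_C_mul, Polynomial.coeff_X_pow, if_neg (by omega), mul_zero],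
        add_zero]
    · subst hii
      rw [if_pos (by omega)]
    · rw [if_neg fun h => hii (Fin.ext (by omega))]

/-- The dual of a row space is the kernel of the matrix. -/
lemma dualCode_codeC {F : Type*} [Field F] {n k ℓ : ℕ} (α v : Fin n → F)
    (η : Fin (ℓ + 1) → F) :
    dualCode (codeC k α v η) = LinearMap.ker (Gmat k α v η).mulVecLin := by
  ext x
  change (∀ c ∈ codeC k α v η, ∑ j, x j * c j = 0) ↔ _
  rw [LinearMap.mem_ker, Matrix.mulVecLin_apply]
  constructor
  · intro h
    ext i
    have := h _ (Submodule.subset_span ⟨i, rfl⟩)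
    simpa [Matrix.mulVec, dotProduct, mul_comm] using this
  · intro h c hc
    refine Submodule.span_induction ?_ ?_ ?_ ?_ hc
    · rintro _ ⟨i, rfl⟩
      have := congrFun h i
      simpa [Matrix.mulVec, dotProduct, mul_comm] using this
    · simp
    · intro a b _ _ ha hb
      simp [mul_add, Finset.sum_add_distrib, ha, hb]
    · intro r a _ ha
      simp [mul_left_comm _ r, ← Finset.mul_sum, ha]

theorem stmt0 {F : Type*} [Field F] {n k ℓ : ℕ}
    (hk2 : 2 ≤ k) (hkn : k ≤ n) (hℓ : k + ℓ + 1 ≤ n)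
    (α v : Fin n → F) (hα : Function.Injective α) (hv : ∀ j, v j ≠ 0)
    (η : Fin (ℓ + 1) → F) (hη : η ≠ 0)
    (hden : 1 + ∑ t : Fin (ℓ + 1), η t * hS α (((t : ℕ) : ℤ) + 1) ≠ 0)
    (Θ : ℕ → F)
    (hΘ : ∀ i : ℕ, Θ i =
      (∑ t : Fin (ℓ + 1), η t * hS α ((k : ℤ) + ((t : ℕ) : ℤ) + (i : ℤ) - (n : ℤ) + 1)) /
        (1 + ∑ t : Fin (ℓ + 1), η t * hS α (((t : ℕ) : ℤ) + 1)))
    (H : Matrix (Fin (n - k)) (Fin n) F)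
    (hH : ∀ (i : Fin (n - k)) (j : Fin n),
      H i j = if (i : ℕ) < n - k - ℓ - 1 then uu α j / v j * α j ^ (i : ℕ)
        else uu α j / v j * (α j ^ (i : ℕ) - Θ (i : ℕ) * α j ^ (n - k))) :
    H.rank = n - k ∧ Gmat k α v η * H.transpose = 0 ∧
      Submodule.span F (Set.range H) = dualCode (codeC k α v η) := by
  have hW := sum_uu_mul_pow α hα
  have hW0 : ∀ m, m + 2 ≤ n → ∑ j, uu α j * α j ^ m = 0 := fun m hm => by
    rw [hW, hS_neg]; omega
  have hWη : ∀ m : ℕ, ∑ j, uu α j * α j ^ m * ∑ t : Fin (ℓ + 1), η t * α j ^ (k + (t : ℕ)) =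
      ∑ t : Fin (ℓ + 1), η t * hS α ((k : ℤ) + ((t : ℕ) : ℤ) + (m : ℤ) - (n : ℤ) + 1) := by
    intro m
    simp_rw [Finset.mul_sum]
    rw [Finset.sum_comm]
    refine Finset.sum_congr rfl fun t _ => ?_
    have h := hW (k + t + m)
    push_cast at h
    rw [← h, Finset.mul_sum]
    exact Finset.sum_congr rfl fun j _ => by ring
  -- Setting `Θ` to zero on the untwisted rows gives all rows of `H` the same shape.
  obtain ⟨θ, hθ1, hθ2⟩ : ∃ θ : ℕ → F, (∀ i, i < n - k - ℓ - 1 → θ i = 0) ∧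
      ∀ i, ¬ i < n - k - ℓ - 1 → θ i = Θ i :=
    ⟨fun i => if i < n - k - ℓ - 1 then 0 else Θ i, fun _ h => if_pos h, fun _ h => if_neg h⟩
  have hH' : ∀ i j, H i j = uu α j / v j * (α j ^ (i : ℕ) - θ i * α j ^ (n - k)) := by
    intro i j
    rw [hH]
    split_ifs with h
    · rw [hθ1 _ h]; ring
    · rw [hθ2 _ h]
  have hθ : ∀ i, θ i * (1 + ∑ t : Fin (ℓ + 1), η t * hS α (((t : ℕ) : ℤ) + 1)) =
      ∑ t : Fin (ℓ + 1), η t * hS α ((k : ℤ) + ((t : ℕ) : ℤ) + (i : ℤ) - (n : ℤ) + 1) := by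
    intro i
    by_cases h : i < n - k - ℓ - 1
    · rw [hθ1 _ h, zero_mul]
      symm
      refine Finset.sum_eq_zero fun t _ => ?_
      rw [hS_neg, mul_zero]
      omega
    · rw [hθ2 _ h, hΘ, div_mul_cancel₀ _ hden]
  have hLI : LinearIndependent F H.row := by
    have h := linearIndependent_eval α (fun j => uu α j / v j) hα
      (fun j => div_ne_zero (uu_ne_zero α hα j) (hv j))
      (fun i : Fin (n - k) => Polynomial.X ^ (i : ℕ) - Polynomial.C (θ i) * Polynomial.X ^ (n - k))
      ?_ ?_
    · convert h using 1
      ext i j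
      simp [Matrix.row, hH']
    · intro i
      rw [Polynomial.degree_lt_iff_coeff_zero]
      intro m hm
      rw [Polynomial.coeff_sub, Polynomial.coeff_C_mul, Polynomial.coeff_X_pow,
        Polynomial.coeff_X_pow, if_neg (by omega), if_neg (by omega)]
      ring
    · intro i i'
      rw [Polynomial.coeff_sub, Polynomial.coeff_C_mul, Polynomial.coeff_X_pow,
        Polynomial.coeff_X_pow, if_neg (show ¬ (i' : ℕ) = n - k by omega), mul_zero, sub_zero]
      simp [Fin.ext_iff, eq_comm]
  have hrank : H.rank = n - k := by
    rw [hLI.rank_matrix, Fintype.card_fin]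
  have hGH : Gmat k α v η * H.transpose = 0 := by
    ext r i
    rw [Matrix.mul_apply, Matrix.zero_apply]
    simp only [Matrix.transpose_apply, hH', Gmat, Matrix.of_apply]
    split_ifs with hr
    · have : ∀ j, v j * α j ^ (r : ℕ) * (uu α j / v j * (α j ^ (i : ℕ) - θ i * α j ^ (n - k))) =
          uu α j * α j ^ ((r : ℕ) + i) - θ i * (uu α j * α j ^ ((r : ℕ) + (n - k))) := by
        intro j
        have := hv j
        field_simp
        ring
      simp_rw [this]
      rw [Finset.sum_sub_distrib, ← Finset.mul_sum, hW0 _ (by omega), hW0 _ (by omega)]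
      ring
    · have : ∀ j, v j * (α j ^ (k - 1) + ∑ t : Fin (ℓ + 1), η t * α j ^ (k + (t : ℕ))) *
            (uu α j / v j * (α j ^ (i : ℕ) - θ i * α j ^ (n - k))) =
          uu α j * α j ^ (k - 1 + i)
          + uu α j * α j ^ (i : ℕ) * (∑ t : Fin (ℓ + 1), η t * α j ^ (k + (t : ℕ)))
          - θ i * (uu α j * α j ^ (k - 1 + (n - k))
            + uu α j * α j ^ (n - k) * (∑ t : Fin (ℓ + 1), η t * α j ^ (k + (t : ℕ)))) := by
        intro j
        have := hv j
        generalize ∑ t : Fin (ℓ + 1), η t * α j ^ (k + (t : ℕ)) = s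
        rw [pow_add, pow_add]
        field_simp
      simp_rw [this]
      rw [Finset.sum_sub_distrib, Finset.sum_add_distrib, ← Finset.mul_sum,
        Finset.sum_add_distrib, hWη, hWη, hW0 _ (by omega), hW, ← hθ]
      have e1 : ((k - 1 + (n - k) : ℕ) : ℤ) - n + 1 = 0 := by omega
      have e2 : ∀ t : Fin (ℓ + 1), (k : ℤ) + ((t : ℕ) : ℤ) + ((n - k : ℕ) : ℤ) - (n : ℤ) + 1 =
          ((t : ℕ) : ℤ) + 1 := fun t => by omega
      simp_rw [e1, e2, hS_zero]
      ring
  refine ⟨hrank, hGH, ?_⟩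
  rw [dualCode_codeC]
  refine Submodule.eq_of_le_of_finrank_eq ?_ ?_
  · rw [Submodule.span_le]
    rintro _ ⟨i, rfl⟩
    rw [SetLike.mem_coe, LinearMap.mem_ker, Matrix.mulVecLin_apply]
    ext r
    exact congrFun (congrFun hGH r) i
  · have h1 := H.rank_eq_finrank_span_row
    have h2 := (Gmat k α v η).mulVecLin.finrank_range_add_finrank_ker
    have h3 : Module.finrank F (LinearMap.range (Gmat k α v η).mulVecLin) = k := by
      have := (linearIndependent_Gmat hk2 hℓ α v hα hv η).rank_matrix
      rwa [Fintype.card_fin] at this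
    rw [Module.finrank_fin_fun, h3] at h2
    rw [hrank] at h1
    have h4 : Module.finrank F (Submodule.span F (Set.range H)) = n - k := h1.symm
    omega
end

section
/- Suppose n = 2k with k ≥ 4, 1 ≤ ℓ ≤ n−k−3, and η_ℓ ≠ 0. Then the code C is not self-dual, i.e., C ≠ C⊥. -/
/-!
Only the inclusion `C ⊆ C⊥` is needed to reach a contradiction. Write `S m = ∑ j, v j ^ 2 * α j ^ m`
for the moments of the weights `v j ^ 2`. Orthogonality of two monomial rows gives `S m = 0` for
`m ≤ 2k - 4`. The twisted row has degree exactly `k + ℓ`, so its orthogonality to the monomial row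
of exponent `m - k - ℓ` reads `η_ℓ * S m + (lower moments) = 0`; because `1 ≤ ℓ ≤ k - 3`, this
exponent lies in `[0, k - 2]` for each of `m = 2k - 3, 2k - 2, 2k - 1`. Hence all `n = 2k` moments
of order below `n` vanish, and the Vandermonde matrix of the distinct points `α j` being
nonsingular, all `v j ^ 2` are zero.
-/

open Finset Matrix

/-- The first `2 * k` power moments of the weights `v j ^ 2` vanish as soon as the rows of the
generator matrix are pairwise orthogonal. -/
theorem moment_eq_zero {F : Type*} [Field F] {n k ℓ : ℕ} (hℓ1 : 1 ≤ ℓ) (hℓ : ℓ + 3 ≤ k)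
    (α v : Fin n → F) (η : Fin (ℓ + 1) → F) (hηℓ : η (Fin.last ℓ) ≠ 0)
    (hG : ∀ a b : Fin k, ∑ j, Gmat k α v η a j * Gmat k α v η b j = 0)
    (m : ℕ) (hm : m < 2 * k) : ∑ j, v j ^ 2 * α j ^ m = 0 := by
  induction m using Nat.strong_induction_on with
  | _ m ih =>
    by_cases h : m ≤ 2 * k - 4
    · rw [← hG ⟨min m (k - 2), by omega⟩ ⟨m - min m (k - 2), by omega⟩]
      refine Finset.sum_congr rfl fun j _ => ?_
      have h1 : min m (k - 2) < k - 1 := by omega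
      have h2 : m - min m (k - 2) < k - 1 := by omega
      have h3 : min m (k - 2) + (m - min m (k - 2)) = m := by omega
      simp only [Gmat, Matrix.of_apply, if_pos h1, if_pos h2]
      calc v j ^ 2 * α j ^ m
          = v j ^ 2 * α j ^ (min m (k - 2) + (m - min m (k - 2))) := by rw [h3]
        _ = _ := by rw [pow_add]; ring
    · obtain ⟨i, hi⟩ : ∃ i, m = i + k + ℓ := ⟨m - k - ℓ, by omega⟩
      have h1 : i < k - 1 := by omega
      have h2 : ¬ (k - 1 < k - 1) := lt_irrefl _
      have key := hG ⟨i, by omega⟩ ⟨k - 1, by omega⟩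
      simp only [Gmat, Matrix.of_apply, if_pos h1, if_neg h2] at key
      have expand : ∀ j, v j * α j ^ i *
          (v j * (α j ^ (k - 1) + ∑ t : Fin (ℓ + 1), η t * α j ^ (k + (t : ℕ)))) =
          v j ^ 2 * α j ^ (i + (k - 1)) +
            ∑ t : Fin (ℓ + 1), η t * (v j ^ 2 * α j ^ (i + k + (t : ℕ))) := by
        intro j
        rw [mul_add, mul_add, Finset.mul_sum, Finset.mul_sum]
        congr 1
        · ring
        · exact Finset.sum_congr rfl fun t _ => by ring
      simp only [expand] at key
      rw [Finset.sum_add_distrib, Finset.sum_comm] at key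
      simp only [← Finset.mul_sum] at key
      rw [ih _ (by omega) (by omega), zero_add, Fin.sum_univ_castSucc,
        Finset.sum_eq_zero, zero_add] at key
      · rw [hi]
        simpa [hηℓ] using key
      · intro t _
        have ht := t.isLt
        rw [ih _ (by simp only [Fin.val_castSucc]; omega)
          (by simp only [Fin.val_castSucc]; omega), mul_zero]

theorem stmt5 {F : Type*} [Field F] {n k ℓ : ℕ}
    (hn : n = 2 * k) (hk4 : 4 ≤ k) (hℓ1 : 1 ≤ ℓ) (hℓ : ℓ ≤ n - k - 3)
    (α v : Fin n → F) (hα : Function.Injective α) (hv : ∀ j, v j ≠ 0)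
    (η : Fin (ℓ + 1) → F) (hη : η ≠ 0) (hηℓ : η (Fin.last ℓ) ≠ 0) :
    codeC k α v η ≠ dualCode (codeC k α v η) := by
  intro hC
  have hG : ∀ a b : Fin k, ∑ j, Gmat k α v η a j * Gmat k α v η b j = 0 := by
    intro a b
    have ha : Gmat k α v η a ∈ dualCode (codeC k α v η) :=
      hC ▸ Submodule.subset_span ⟨a, rfl⟩
    exact ha _ (Submodule.subset_span ⟨b, rfl⟩)
  have h0 : (fun j => v j ^ 2) = 0 :=
    Matrix.eq_zero_of_forall_pow_sum_mul_pow_eq_zero hα fun i =>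
      moment_eq_zero hℓ1 (by omega) α v η hηℓ hG i (by omega)
  have hpos : 0 < n := by omega
  exact pow_ne_zero 2 (hv ⟨0, hpos⟩) (congrFun h0 ⟨0, hpos⟩)
end

section
/- Suppose there exists λ ∈ F_q with λ ≠ 0 such that λ·u_i = v_i² for all 1 ≤ i ≤ n, and suppose 2k ≤ n − 2ℓ − 2. Then the code C is self-orthogonal, i.e., C ⊆ C⊥. -/
/-!
Every codeword is the evaluation `v j * p(α j)` of a polynomial `p` of degree at most `k + ℓ`.
For two codewords with polynomials `p` and `q`, the hypothesis `lam * u j = v j ^ 2` turns their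
inner product into `lam * ∑ j, u j * (p * q)(α j)`. By Lagrange interpolation, for a polynomial `P`
of degree less than `n` the sum `∑ j, u j * P(α j)` is the coefficient of `X ^ (n - 1)` in `P`;
since `deg (p * q) ≤ 2 * (k + ℓ) ≤ n - 2`, that coefficient vanishes.
-/

open Finset Matrix

open Polynomial in
/-- The divided difference at `n` nodes annihilates polynomials of degree less than `n - 1`. -/
lemma sum_uu_mul_eval {F : Type*} [Field F] {n : ℕ} (α : Fin n → F)
    (hα : Function.Injective α) (P : F[X]) (hP : P.natDegree + 1 < n) :
    ∑ j, uu α j * P.eval (α j) = 0 := by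
  have hdeg : P.degree < #(univ : Finset (Fin n)) := by
    refine degree_le_natDegree.trans_lt ?_
    rw [card_univ, Fintype.card_fin]
    exact_mod_cast (by omega : P.natDegree < n)
  have h := Lagrange.coeff_eq_sum (s := univ) (v := α) hα.injOn hdeg
  rw [card_univ, Fintype.card_fin, coeff_eq_zero_of_natDegree_lt (by omega)] at h
  rw [h]
  refine sum_congr rfl fun j _ => ?_
  rw [uu, prod_inv_distrib, div_eq_mul_inv, mul_comm]

open Polynomial in
lemma exists_poly_of_mem_codeC {F : Type*} [Field F] {n k ℓ : ℕ} (α v : Fin n → F)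
    (η : Fin (ℓ + 1) → F) {c : Fin n → F} (hc : c ∈ codeC k α v η) :
    ∃ p : F[X], p.natDegree ≤ k + ℓ ∧ ∀ j, c j = v j * p.eval (α j) := by
  induction hc using Submodule.span_induction with
  | mem x hx =>
    obtain ⟨i, rfl⟩ := hx
    by_cases hi : (i : ℕ) < k - 1
    · refine ⟨X ^ (i : ℕ), ?_, fun j => ?_⟩
      · rw [natDegree_X_pow]; omega
      · simp [Gmat, hi]
    · refine ⟨X ^ (k - 1) + ∑ t : Fin (ℓ + 1), C (η t) * X ^ (k + (t : ℕ)), ?_, fun j => ?_⟩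
      · refine natDegree_add_le_of_degree_le ?_ (natDegree_sum_le_of_forall_le _ _ fun t _ => ?_)
        · rw [natDegree_X_pow]; omega
        · exact (natDegree_C_mul_X_pow_le _ _).trans (by omega)
      · simp [Gmat, hi, eval_finsetSum]
  | zero => exact ⟨0, by simp, by simp⟩
  | add x y _ _ hx hy =>
    obtain ⟨p, hp, hpx⟩ := hx
    obtain ⟨q, hq, hqy⟩ := hy
    exact ⟨p + q, natDegree_add_le_of_degree_le hp hq, fun j => by simp [hpx, hqy, mul_add]⟩
  | smul a x _ hx =>
    obtain ⟨p, hp, hpx⟩ := hx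
    refine ⟨C a * p, (natDegree_C_mul_le _ _).trans hp, fun j => ?_⟩
    simp only [Pi.smul_apply, smul_eq_mul, hpx, eval_mul, eval_C]
    ring

theorem stmt6 {F : Type*} [Field F] {n k ℓ : ℕ}
    (hk2 : 2 ≤ k) (hkn : k ≤ n) (hℓ : k + ℓ + 1 ≤ n)
    (α v : Fin n → F) (hα : Function.Injective α) (hv : ∀ j, v j ≠ 0)
    (η : Fin (ℓ + 1) → F) (hη : η ≠ 0)
    (lam : F) (hlam : lam ≠ 0) (hlu : ∀ i, lam * uu α i = v i ^ 2)
    (hk : 2 * k + 2 * ℓ + 2 ≤ n) :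
    codeC k α v η ≤ dualCode (codeC k α v η) := by
  intro x hx c hc
  obtain ⟨p, hp, hpx⟩ := exists_poly_of_mem_codeC α v η hx
  obtain ⟨q, hq, hqc⟩ := exists_poly_of_mem_codeC α v η hc
  have hpq : (p * q).natDegree + 1 < n := by
    have := Polynomial.natDegree_mul_le (p := p) (q := q)
    omega
  calc ∑ j, x j * c j = lam * ∑ j, uu α j * (p * q).eval (α j) := by
        rw [mul_sum]
        refine sum_congr rfl fun j _ => ?_
        rw [hpx, hqc, Polynomial.eval_mul, ← mul_assoc lam, hlu]
        ring
    _ = 0 := by rw [sum_uu_mul_eval α hα _ hpq, mul_zero]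
end

section
/- Let α_1, …, α_n ∈ F_q be pairwise distinct and let k be an integer with 1 ≤ k ≤ n/2. Then GRS_k(α, 1) ⋆ GRS_k(α, 1) = GRS_{2k−1}(α, 1), where 1 denotes the all-ones vector. -/
/-!
Evaluation at the points `α j` is a linear map on polynomials, and `GRS_m(α, 1)` is the image of the
space of polynomials of degree `< m` (`GRScode_one`). Evaluation turns products of polynomials into
Schur products, so one inclusion is the bound `(k - 1) + (k - 1) < 2k - 1` on degrees. For the
other, `GRS_{2k-1}(α, 1)` is spanned by the evaluations of the monomials `X ^ i` with `i ≤ 2k - 2`,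
and each such monomial factors as `X ^ a * X ^ b` with `a, b ≤ k - 1`.
-/


open Finset Matrix

/-- The generalized Reed–Solomon code `GRS_m(β, w)`. -/
noncomputable def GRScode {F : Type*} [Field F] {n : ℕ} (m : ℕ) (β w : Fin n → F) :
    Submodule F (Fin n → F) :=
  Submodule.span F
    {x | ∃ f : Polynomial F, f.degree < (m : ℕ) ∧ x = fun j => w j * f.eval (β j)}

/-- The Schur (coordinatewise) product of two linear codes. -/
noncomputable def schurMul {F : Type*} [Field F] {n : ℕ}
    (C₁ C₂ : Submodule F (Fin n → F)) : Submodule F (Fin n → F) :=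
  Submodule.span F {x | ∃ c₁ ∈ C₁, ∃ c₂ ∈ C₂, x = fun j => c₁ j * c₂ j}

/-- The linear map sending a polynomial to its vector of values at the points `β j`. -/
noncomputable def evalVec {F : Type*} [Field F] {n : ℕ} (β : Fin n → F) :
    Polynomial F →ₗ[F] (Fin n → F) :=
  LinearMap.pi fun j => Polynomial.leval (β j)

theorem evalVec_apply {F : Type*} [Field F] {n : ℕ} (β : Fin n → F) (f : Polynomial F) :
    evalVec β f = fun j => f.eval (β j) := rfl

theorem GRScode_one {F : Type*} [Field F] {n : ℕ} (m : ℕ) (β : Fin n → F) :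
    GRScode m β 1 = (Polynomial.degreeLT F m).map (evalVec β) := by
  rw [GRScode, ← Submodule.span_eq ((Polynomial.degreeLT F m).map (evalVec β))]
  congr 1
  ext x
  simp [Polynomial.mem_degreeLT, evalVec_apply, eq_comm]

theorem stmt14 {F : Type*} [Field F] {n : ℕ}
    (α : Fin n → F) (hα : Function.Injective α)
    (k : ℕ) (hk1 : 1 ≤ k) (hk : 2 * k ≤ n) :
    schurMul (GRScode k α 1) (GRScode k α 1) = GRScode (2 * k - 1) α 1 := by
  simp only [GRScode_one]
  apply le_antisymm
  · refine Submodule.span_le.2 ?_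
    rintro _ ⟨_, ⟨f, hf, rfl⟩, _, ⟨g, hg, rfl⟩, rfl⟩
    refine ⟨f * g, ?_, by simp [evalVec_apply]⟩
    simp only [SetLike.mem_coe, Polynomial.mem_degreeLT] at hf hg ⊢
    -- The zero polynomial has degree `⊥`, so the sum of degrees is treated apart from it.
    by_cases h0 : f = 0
    · simp [h0]
    by_cases h1 : g = 0
    · simp [h1]
    rw [← Polynomial.natDegree_lt_iff_degree_lt h0] at hf
    rw [← Polynomial.natDegree_lt_iff_degree_lt h1] at hg
    rw [← Polynomial.natDegree_lt_iff_degree_lt (mul_ne_zero h0 h1),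
      Polynomial.natDegree_mul h0 h1]
    omega
  · classical
    rw [Polynomial.degreeLT_eq_span_X_pow, Submodule.map_span, Submodule.span_le]
    rintro _ ⟨p, hp, rfl⟩
    simp only [Finset.coe_image, Set.mem_image, Finset.mem_coe, Finset.mem_range] at hp
    obtain ⟨i, hi, rfl⟩ := hp
    have hX : ∀ a < k, evalVec α (Polynomial.X ^ a) ∈
        (Polynomial.degreeLT F k).map (evalVec α) := fun a ha =>
      Submodule.mem_map_of_mem (Polynomial.mem_degreeLT.2 (by
        rw [Polynomial.degree_X_pow]; exact_mod_cast ha))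
    refine Submodule.subset_span ⟨_, hX (min i (k - 1)) (by omega), _,
      hX (i - min i (k - 1)) (by omega), ?_⟩
    funext j
    simp only [evalVec_apply, Polynomial.eval_pow, Polynomial.eval_X, ← pow_add]
    congr 1
    omega
end
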